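/- For every (s,v) ∈ Λ̄₂, the rate function I(s,v) admits the Fourier-series representation I(s,v) = (6/π) ∑_{n=1}^∞ (−1)^{n−1} n^{−2} sin(nπ/3) cos(2(1−s)nπ/3) + (5/π) ∑_{n=1}^∞ n^{−2} sin(nπ/3) − (6/π) ∑_{n=1}^∞ n^{−2} sin(nπ/3) cos((1−s+v)nπ/3) − (3/π) ∑_{n=1}^∞ n^{−2} sin(nπ/3) cos((1−s−v)nπ/3), where I(s,v) = 3∫_0^{(1−s−v)/6} log[sin(π(φ+1/6))/sin(π(1/6−φ))] dφ + 6∫_0^{(1−s+v)/6} log[sin(π(φ+1/6))/sin(π(1/6−φ))] dφ + 6∫_0^{(1−s)/3} log[cos(π(φ+1/6))/cos(π(1/6−φ))] dφ. -/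

import Mathlib

open scoped Real

/-- The scaled region `Λ̄₂`. -/
def LambdaBar2 : Set (ℝ × ℝ) :=
  {p | (0 ≤ p.1 ∧ p.1 ≤ 1 ∧ -p.1 ≤ p.2 ∧ p.2 ≤ p.1) ∨
       (1 < p.1 ∧ p.1 ≤ 2 ∧ -(2 - p.1) ≤ p.2 ∧ p.2 ≤ 2 - p.1)}

/-- The rate function `I(s,v)` in its integral representation. -/
noncomputable def rateI (s v : ℝ) : ℝ :=
  3 * (∫ φ in (0 : ℝ)..((1 - s - v) / 6),
        Real.log (Real.sin (π * (φ + 1 / 6)) / Real.sin (π * (1 / 6 - φ)))) +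
  6 * (∫ φ in (0 : ℝ)..((1 - s + v) / 6),
        Real.log (Real.sin (π * (φ + 1 / 6)) / Real.sin (π * (1 / 6 - φ)))) +
  6 * (∫ φ in (0 : ℝ)..((1 - s) / 3),
        Real.log (Real.cos (π * (φ + 1 / 6)) / Real.cos (π * (1 / 6 - φ))))

/-!
The integrals in `rateI` are combinations of values of the Clausen function
`Cl₂ θ = ∑ sin (n θ) / n ^ 2`, because `∫ x in 0..a, log |2 sin (x / 2)| = - Cl₂ a`. The latter
is obtained by Abel summation: for `|r| < 1` the Taylor series of `log (1 - r e^{ix})` may be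
integrated term by term, and as `r → 1` the integrals converge by dominated convergence, thanks to
`|sin x| ≤ |1 - r e^{ix}| ≤ 2`. The sum `Cl₂ (θ + y) + Cl₂ (θ - y)` is the series of
`2 sin (n θ) cos (n y) / n ^ 2`, a cosine is a sine shifted by `π / 2`, and the constant `5 / π`
comes from `Cl₂ (π / 3 + π) = - (2 / 3) Cl₂ (π / 3)`, a case of the duplication formula.
-/

open MeasureTheory Filter Topology

section Clausen

/-- The Clausen function `Cl₂` of order two. Its series is indexed from `n = 0`, where the term is
`0 / 0 = 0`. -/
noncomputable def clausen (θ : ℝ) : ℝ := ∑' n : ℕ, Real.sin (n * θ) / (n : ℝ) ^ 2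

variable (θ : ℝ)

lemma hasSum_clausen : HasSum (fun n : ℕ => Real.sin (n * θ) / (n : ℝ) ^ 2) (clausen θ) := by
  refine (Summable.of_norm_bounded (Real.summable_one_div_nat_pow.2 one_lt_two) fun n => ?_).hasSum
  rw [norm_div, Real.norm_eq_abs, norm_pow, Real.norm_natCast]
  gcongr
  exact Real.abs_sin_le_one _

lemma hasSum_clausen_succ :
    HasSum (fun n : ℕ => 1 / ((n : ℝ) + 1) ^ 2 * Real.sin (((n : ℝ) + 1) * θ)) (clausen θ) := by
  simpa [div_eq_inv_mul] using (hasSum_nat_add_iff' 1).2 (hasSum_clausen θ)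

lemma clausen_neg : clausen (-θ) = -clausen θ := by
  simp only [clausen, mul_neg, Real.sin_neg, neg_div, tsum_neg]

lemma clausen_add_two_pi : clausen (θ + 2 * π) = clausen θ := by
  simp only [clausen, mul_add, Real.sin_add_nat_mul_two_pi]

lemma clausen_two_mul : clausen (2 * θ) = 2 * clausen θ + 2 * clausen (θ + π) := by
  have hsum : HasSum (fun n : ℕ => (1 + (-1) ^ n) * (Real.sin (n * θ) / (n : ℝ) ^ 2))
      (clausen θ + clausen (θ + π)) := by
    refine ((hasSum_clausen θ).add (hasSum_clausen (θ + π))).congr_fun fun n => ?_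
    rw [mul_add, Real.sin_add_nat_mul_pi]
    ring
  have hodd : ∀ n ∉ Set.range (2 * · : ℕ → ℕ),
      (1 + (-1) ^ n) * (Real.sin (n * θ) / (n : ℝ) ^ 2) = 0 := by
    intro n hn
    have : Odd n := Nat.not_even_iff_odd.1 fun ⟨k, hk⟩ => hn ⟨k, by grind⟩
    simp [this.neg_one_pow]
  have heven := ((mul_right_injective₀ two_ne_zero).hasSum_iff hodd).2 hsum
  have hhalf : HasSum (fun n : ℕ => Real.sin (n * (2 * θ)) / (n : ℝ) ^ 2 / 2)
      (clausen θ + clausen (θ + π)) := by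
    refine heven.congr_fun fun n => ?_
    have hsign : (-1 : ℝ) ^ (2 * n) = 1 := (even_two_mul n).neg_one_pow
    have hangle : ((2 * n : ℕ) : ℝ) * θ = n * (2 * θ) := by push_cast; ring
    simp only [Function.comp_apply]
    rw [hsign, hangle, Nat.cast_mul, Nat.cast_ofNat]
    ring
  linarith [((hasSum_clausen (2 * θ)).div_const 2).unique hhalf]

lemma clausen_pi_div_three_add_pi : clausen (π / 3 + π) = -(2 / 3) * clausen (π / 3) := by
  have hreflect : clausen (2 * (π / 3)) = -clausen (π / 3 + π) := by
    rw [← clausen_neg, ← clausen_add_two_pi (-(π / 3 + π))]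
    congr 1
    ring
  linarith [clausen_two_mul (π / 3)]

lemma tsum_sin_mul_cos_div_sq (y : ℝ) :
    ∑' n : ℕ, 1 / ((n : ℝ) + 1) ^ 2 * Real.sin (((n : ℝ) + 1) * θ) * Real.cos (((n : ℝ) + 1) * y)
      = (clausen (θ + y) + clausen (θ - y)) / 2 := by
  refine ((((hasSum_clausen_succ _).add (hasSum_clausen_succ _)).div_const 2).congr_fun
    fun n => ?_).tsum_eq
  rw [mul_add, mul_sub, Real.sin_add, Real.sin_sub]
  ring

lemma tsum_alternating_sin_mul_cos_div_sq (y : ℝ) :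
    ∑' n : ℕ, (-1) ^ n / ((n : ℝ) + 1) ^ 2 * Real.sin (((n : ℝ) + 1) * θ)
        * Real.cos (((n : ℝ) + 1) * y)
      = -((clausen (θ + π + y) + clausen (θ + π - y)) / 2) := by
  rw [← tsum_sin_mul_cos_div_sq, ← tsum_neg]
  refine tsum_congr fun n => ?_
  have hshift : Real.sin (((n : ℝ) + 1) * (θ + π)) = (-1) ^ (n + 1) * Real.sin ((n + 1) * θ) := by
    rw [mul_add, ← Real.sin_add_nat_mul_pi, Nat.cast_succ]
  rw [hshift]
  ring

end Clausen

section AbelSummation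

variable {r : ℝ}

lemma norm_ofReal_mul_exp_mul_I (r x : ℝ) : ‖(r : ℂ) * Complex.exp (x * Complex.I)‖ = |r| := by
  rw [norm_mul, Complex.norm_exp_ofReal_mul_I, mul_one, Complex.norm_real, Real.norm_eq_abs]

lemma hasSum_log_norm_one_sub_mul_exp (hr : |r| < 1) (x : ℝ) :
    HasSum (fun n : ℕ => -(r ^ n / n * Real.cos (n * x)))
      (Real.log ‖1 - r * Complex.exp (x * Complex.I)‖) := by
  have hlog := (Complex.hasSum_re (Complex.hasSum_taylorSeries_neg_log
    ((norm_ofReal_mul_exp_mul_I r x).trans_lt hr))).neg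
  rw [Complex.neg_re, neg_neg, Complex.log_re] at hlog
  refine hlog.congr_fun fun n => ?_
  have hterm : (r * Complex.exp (x * Complex.I)) ^ n / n
      = ((r ^ n / n : ℝ) : ℂ) * Complex.exp ((n * x : ℝ) * Complex.I) := by
    rw [mul_pow, ← Complex.exp_nat_mul]
    push_cast
    ring_nf
  rw [hterm, Complex.re_ofReal_mul, Complex.exp_ofReal_mul_I_re]

lemma hasSum_integral_log_norm_one_sub_mul_exp (hr : |r| < 1) (a : ℝ) :
    HasSum (fun n : ℕ => -(Real.sin (n * a) / (n : ℝ) ^ 2 * r ^ n))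
      (∫ x in (0 : ℝ)..a, Real.log ‖1 - r * Complex.exp (x * Complex.I)‖) := by
  have hint := intervalIntegral.hasSum_integral_of_dominated_convergence (μ := volume) (a := 0)
    (b := a) (F := fun (n : ℕ) x => -(r ^ n / n * Real.cos (n * x))) (fun n _ => |r| ^ n)
    (fun n => Continuous.aestronglyMeasurable (by fun_prop))
    (fun n => .of_forall fun x _ => ?_)
    (.of_forall fun _ _ => summable_geometric_of_lt_one (abs_nonneg r) hr)
    intervalIntegrable_const
    (.of_forall fun x _ => hasSum_log_norm_one_sub_mul_exp hr x)
  · refine hint.congr_fun fun n => ?_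
    rcases eq_or_ne n 0 with rfl | hn
    · simp
    · rw [intervalIntegral.integral_neg, intervalIntegral.integral_const_mul,
        intervalIntegral.integral_comp_mul_left _ (Nat.cast_ne_zero.2 hn), integral_cos, mul_zero,
        Real.sin_zero, sub_zero, smul_eq_mul]
      ring
  · rw [norm_neg, norm_mul, norm_div, norm_pow, Real.norm_natCast, Real.norm_eq_abs]
    calc |r| ^ n / n * |Real.cos (n * x)| ≤ |r| ^ n * 1 := by
          gcongr
          · exact div_nat_le_self_of_nonnneg (by positivity) n
          · exact Real.abs_cos_le_one _
      _ = |r| ^ n := mul_one _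

lemma abs_sin_le_norm_one_sub_mul_exp (r x : ℝ) :
    |Real.sin x| ≤ ‖1 - r * Complex.exp (x * Complex.I)‖ := by
  rw [Complex.norm_def]
  refine Real.abs_le_sqrt ?_
  simp only [Complex.normSq_apply, Complex.sub_re, Complex.sub_im, Complex.re_ofReal_mul,
    Complex.im_ofReal_mul, Complex.exp_ofReal_mul_I_re, Complex.exp_ofReal_mul_I_im, Complex.one_re,
    Complex.one_im]
  nlinarith [sq_nonneg (r - Real.cos x), Real.sin_sq_add_cos_sq x]

lemma abs_log_norm_one_sub_mul_exp_le {x : ℝ} (hr : |r| ≤ 1) (hx : Real.sin x ≠ 0) :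
    |Real.log ‖1 - r * Complex.exp (x * Complex.I)‖| ≤ Real.log 2 + |Real.log (Real.sin x)| := by
  have hpos : 0 < |Real.sin x| := abs_pos.2 hx
  have hlower := abs_sin_le_norm_one_sub_mul_exp r x
  have hupper : ‖1 - r * Complex.exp (x * Complex.I)‖ ≤ 2 := by
    refine (norm_sub_le _ _).trans ?_
    rw [norm_ofReal_mul_exp_mul_I, norm_one]
    linarith
  have hlog_lower := Real.log_le_log hpos hlower
  have hlog_upper := Real.log_le_log (hpos.trans_le hlower) hupper
  rw [Real.log_abs] at hlog_lower
  have hlog_two : 0 ≤ Real.log 2 := Real.log_nonneg one_le_two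
  rw [abs_le]
  constructor <;>
    linarith [neg_abs_le (Real.log (Real.sin x)), abs_nonneg (Real.log (Real.sin x))]

lemma ae_sin_ne_zero : ∀ᵐ x : ℝ, Real.sin x ≠ 0 := by
  refine ((Set.countable_range fun n : ℤ => n * π).mono fun x hx => ?_).measure_zero _
  exact Real.sin_eq_zero_iff.1 (not_not.1 hx)

lemma tendsto_integral_log_norm_one_sub_mul_exp (a : ℝ) :
    Tendsto (fun r : ℝ => ∫ x in (0 : ℝ)..a, Real.log ‖1 - r * Complex.exp (x * Complex.I)‖)
      (𝓝[<] 1) (𝓝 (∫ x in (0 : ℝ)..a, Real.log ‖1 - Complex.exp (x * Complex.I)‖)) := by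
  refine intervalIntegral.tendsto_integral_filter_of_dominated_convergence
    (fun x => Real.log 2 + |Real.log (Real.sin x)|) ?_ ?_
    (intervalIntegrable_const.add intervalIntegrable_log_sin.abs) ?_
  · exact .of_forall fun r =>
      (Real.measurable_log.comp (Continuous.measurable (by fun_prop))).aestronglyMeasurable
  · filter_upwards [Ioo_mem_nhdsLT (show (-1 : ℝ) < 1 by norm_num)] with r hr
    filter_upwards [ae_sin_ne_zero] with x hx _
    exact abs_log_norm_one_sub_mul_exp_le (abs_le.2 ⟨hr.1.le, hr.2.le⟩) hx
  · filter_upwards [ae_sin_ne_zero] with x hx _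
    have hcont : Continuous fun r : ℝ => ‖1 - r * Complex.exp (x * Complex.I)‖ := by fun_prop
    have hne := (abs_pos.2 hx).trans_le (abs_sin_le_norm_one_sub_mul_exp 1 x)
    simpa using ((hcont.tendsto 1).log hne.ne').mono_left nhdsWithin_le_nhds

lemma integral_log_norm_one_sub_exp (a : ℝ) :
    ∫ x in (0 : ℝ)..a, Real.log ‖1 - Complex.exp (x * Complex.I)‖ = -clausen a := by
  have habel := (Real.tendsto_tsum_powerSeries_nhdsWithin_lt
    (hasSum_clausen a).tendsto_sum_nat).neg
  refine tendsto_nhds_unique (tendsto_integral_log_norm_one_sub_mul_exp a) (habel.congr' ?_)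
  filter_upwards [Ioo_mem_nhdsLT (show (-1 : ℝ) < 1 by norm_num)] with r hr
  rw [← tsum_neg]
  exact (hasSum_integral_log_norm_one_sub_mul_exp (abs_lt.2 hr) a).tsum_eq

end AbelSummation

section LogSineIntegrals

lemma norm_one_sub_exp_two_mul (x : ℝ) :
    ‖1 - Complex.exp ((2 * x : ℝ) * Complex.I)‖ = 2 * |Real.sin x| := by
  rw [norm_sub_rev, mul_comm, Complex.norm_exp_I_mul_ofReal_sub_one,
    mul_div_cancel_left₀ x two_ne_zero, norm_mul, Real.norm_eq_abs, Real.norm_eq_abs, abs_two]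

/- `Real.log x = log |x|`, so where `sin x < 0` the integrand is `log |sin x|`. -/
lemma integral_log_sin_zero_left (a : ℝ) :
    ∫ x in (0 : ℝ)..a, Real.log (Real.sin x) = -(clausen (2 * a) / 2) - a * Real.log 2 := by
  have hscale := intervalIntegral.integral_comp_mul_left (a := 0) (b := a)
    (fun x : ℝ => Real.log ‖1 - Complex.exp (x * Complex.I)‖) (two_ne_zero (α := ℝ))
  rw [mul_zero, integral_log_norm_one_sub_exp, smul_eq_mul] at hscale
  have hlog : ∫ x in (0 : ℝ)..a, Real.log ‖1 - Complex.exp ((2 * x : ℝ) * Complex.I)‖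
      = ∫ x in (0 : ℝ)..a, (Real.log 2 + Real.log (Real.sin x)) := by
    refine intervalIntegral.integral_congr_ae ?_
    filter_upwards [ae_sin_ne_zero] with x hx _
    rw [norm_one_sub_exp_two_mul, Real.log_mul two_ne_zero (abs_ne_zero.2 hx), Real.log_abs]
  have hint : IntervalIntegrable (fun x => Real.log (Real.sin x)) volume 0 a :=
    intervalIntegrable_log_sin
  rw [hlog, intervalIntegral.integral_add intervalIntegrable_const hint,
    intervalIntegral.integral_const, smul_eq_mul] at hscale
  linarith

lemma integral_log_sin (a b : ℝ) :
    ∫ x in a..b, Real.log (Real.sin x)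
      = (clausen (2 * a) - clausen (2 * b)) / 2 - (b - a) * Real.log 2 := by
  have hint (c : ℝ) : IntervalIntegrable (fun x => Real.log (Real.sin x)) volume 0 c :=
    intervalIntegrable_log_sin
  rw [← intervalIntegral.integral_interval_sub_left (hint b) (hint a),
    integral_log_sin_zero_left, integral_log_sin_zero_left]
  ring

lemma integral_log_sin_add_div_sin_sub (a y : ℝ) :
    ∫ x in (0 : ℝ)..y, Real.log (Real.sin (a + x) / Real.sin (a - x))
      = clausen (2 * a) - (clausen (2 * a + 2 * y) + clausen (2 * a - 2 * y)) / 2 := by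
  have hlog : ∫ x in (0 : ℝ)..y, Real.log (Real.sin (a + x) / Real.sin (a - x))
      = ∫ x in (0 : ℝ)..y, (Real.log (Real.sin (a + x)) - Real.log (Real.sin (a - x))) := by
    refine intervalIntegral.integral_congr_ae ?_
    filter_upwards [(measurePreserving_add_left volume a).quasiMeasurePreserving.ae ae_sin_ne_zero,
      (Measure.measurePreserving_sub_left volume a).quasiMeasurePreserving.ae ae_sin_ne_zero]
      with x hadd hsub _
    exact Real.log_div hadd hsub
  have hadd : IntervalIntegrable (fun x => Real.log (Real.sin (a + x))) volume 0 y := by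
    simpa using (intervalIntegrable_log_sin (a := a) (b := a + y)).comp_add_left a
  have hsub : IntervalIntegrable (fun x => Real.log (Real.sin (a - x))) volume 0 y := by
    simpa using (intervalIntegrable_log_sin (a := a) (b := a - y)).comp_sub_left a
  rw [hlog, intervalIntegral.integral_sub hadd hsub,
    intervalIntegral.integral_comp_add_left (fun x => Real.log (Real.sin x)),
    intervalIntegral.integral_comp_sub_left (fun x => Real.log (Real.sin x)),
    integral_log_sin, integral_log_sin, add_zero, sub_zero, mul_add, mul_sub]
  ring

lemma integral_log_sin_pi_mul_div (α y : ℝ) :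
    ∫ φ in (0 : ℝ)..y, Real.log (Real.sin (π * (φ + α)) / Real.sin (π * (α - φ)))
      = (clausen (2 * π * α)
          - (clausen (2 * π * α + 2 * π * y) + clausen (2 * π * α - 2 * π * y)) / 2) / π := by
  have hscale := intervalIntegral.integral_comp_mul_left (a := 0) (b := y)
    (fun x => Real.log (Real.sin (π * α + x) / Real.sin (π * α - x))) Real.pi_ne_zero
  rw [mul_zero, integral_log_sin_add_div_sin_sub, smul_eq_mul, ← div_eq_inv_mul] at hscale
  simpa only [add_comm _ α, mul_add, mul_sub, mul_assoc] using hscale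

lemma integral_log_cos_pi_mul_div (α y : ℝ) :
    ∫ φ in (0 : ℝ)..y, Real.log (Real.cos (π * (φ + α)) / Real.cos (π * (α - φ)))
      = (clausen (2 * π * α + π)
          - (clausen (2 * π * α + π + 2 * π * y)
              + clausen (2 * π * α + π - 2 * π * y)) / 2) / π := by
  have hangle : 2 * π * (α + 1 / 2) = 2 * π * α + π := by ring
  rw [← hangle, ← integral_log_sin_pi_mul_div]
  congr! 4 with φ
  · rw [← Real.sin_add_pi_div_two]
    congr 1
    ring
  · rw [← Real.sin_add_pi_div_two]
    congr 1
    ring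

end LogSineIntegrals

/-- The Fourier-series representation of the rate function `I(s,v)` on `Λ̄₂`
(series reindexed over `n : ℕ` starting from `0`). -/
theorem rateI_fourier_representation (s v : ℝ) (hsv : (s, v) ∈ LambdaBar2) :
    rateI s v
      = 6 / π * (∑' n : ℕ, (-1 : ℝ) ^ n / ((n : ℝ) + 1) ^ 2 * Real.sin (((n : ℝ) + 1) * π / 3) *
            Real.cos (2 * (1 - s) * ((n : ℝ) + 1) * π / 3)) +
        5 / π * (∑' n : ℕ, (1 : ℝ) / ((n : ℝ) + 1) ^ 2 * Real.sin (((n : ℝ) + 1) * π / 3)) -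
        6 / π * (∑' n : ℕ, (1 : ℝ) / ((n : ℝ) + 1) ^ 2 * Real.sin (((n : ℝ) + 1) * π / 3) *
            Real.cos ((1 - s + v) * ((n : ℝ) + 1) * π / 3)) -
        3 / π * (∑' n : ℕ, (1 : ℝ) / ((n : ℝ) + 1) ^ 2 * Real.sin (((n : ℝ) + 1) * π / 3) *
            Real.cos ((1 - s - v) * ((n : ℝ) + 1) * π / 3)) := by
  have hsin (n : ℕ) : ((n : ℝ) + 1) * π / 3 = (n + 1) * (π / 3) := by ring
  have hcos (y : ℝ) (n : ℕ) : y * ((n : ℝ) + 1) * π / 3 = (n + 1) * (y * π / 3) := by ring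
  have hθ : 2 * π * (1 / 6) = π / 3 := by ring
  have hsixth (y : ℝ) : 2 * π * (y / 6) = y * π / 3 := by ring
  have hthird (y : ℝ) : 2 * π * (y / 3) = 2 * y * π / 3 := by ring
  simp only [hsin, hcos, tsum_sin_mul_cos_div_sq, tsum_alternating_sin_mul_cos_div_sq,
    (hasSum_clausen_succ _).tsum_eq]
  rw [rateI, integral_log_sin_pi_mul_div, integral_log_sin_pi_mul_div, integral_log_cos_pi_mul_div,
    hθ, hsixth, hsixth, hthird, clausen_pi_div_three_add_pi]
  ring
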